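/- arXiv:2302.01306 — 5 statements merged into one kernel-verified Lean document; each statement's English description precedes it below -/
import Mathlib

section
/- Let G1 and G2 be two vertex-disjoint finite graphs (each with at least one vertex). Then the z-chromatic number of the disjoint union satisfies z(G1 ∪ G2) = max{z(G1), z(G2)}. -/
open SimpleGraph

universe u v

/-- `c` is a z-coloring of `G` using exactly the `k` colors `0, …, k-1`:
it is proper, every color class is nonempty, every vertex of color `j` has a
neighbor of each color `i < j` (Grundy property), and there are vertices
`u 0, …, u (k-1)` with `u j` of color `j`, such that `u (k-1)` is adjacent to
every other `u j`, and each `u j` has a neighbor of every color `i ≠ j`. -/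
def IsZColoring {V : Type u} (G : SimpleGraph V) (k : ℕ) (c : V → ℕ) : Prop :=
  (∀ v, c v < k) ∧
  (∀ ⦃x y : V⦄, G.Adj x y → c x ≠ c y) ∧
  (∀ i, i < k → ∃ v, c v = i) ∧
  (∀ v : V, ∀ i, i < c v → ∃ w, G.Adj v w ∧ c w = i) ∧
  (∃ u : ℕ → V,
    (∀ j, j < k → c (u j) = j) ∧
    (∀ j, j < k - 1 → G.Adj (u (k - 1)) (u j)) ∧
    (∀ i, i < k → ∀ j, j < k → i ≠ j → ∃ w, G.Adj (u j) w ∧ c w = i))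

/-- The z-chromatic number: the maximum number of colors in a z-coloring. -/
noncomputable def zNum {V : Type u} (G : SimpleGraph V) : ℕ :=
  sSup {k | ∃ c : V → ℕ, IsZColoring G k c}

/-- `c` is a Grundy coloring of `G` using exactly the `k` colors `0, …, k-1`. -/
def IsGrundyColoring {V : Type u} (G : SimpleGraph V) (k : ℕ) (c : V → ℕ) : Prop :=
  (∀ v, c v < k) ∧
  (∀ ⦃x y : V⦄, G.Adj x y → c x ≠ c y) ∧
  (∀ i, i < k → ∃ v, c v = i) ∧
  (∀ v : V, ∀ i, i < c v → ∃ w, G.Adj v w ∧ c w = i)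

/-- The Grundy number: the maximum number of colors in a Grundy coloring. -/
noncomputable def grundyNum {V : Type u} (G : SimpleGraph V) : ℕ :=
  sSup {k | ∃ c : V → ℕ, IsGrundyColoring G k c}

/-- `c` is a b-coloring of `G` using exactly the `k` colors `0, …, k-1`:
proper, and every color class contains a vertex adjacent to a vertex of every
other color class. -/
def IsBColoring {V : Type u} (G : SimpleGraph V) (k : ℕ) (c : V → ℕ) : Prop :=
  (∀ v, c v < k) ∧
  (∀ ⦃x y : V⦄, G.Adj x y → c x ≠ c y) ∧
  (∀ i, i < k → ∃ v, c v = i ∧ ∀ j, j < k → j ≠ i → ∃ w, G.Adj v w ∧ c w = j)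

/-- The b-chromatic number: the maximum number of colors in a b-coloring. -/
noncomputable def bNum {V : Type u} (G : SimpleGraph V) : ℕ :=
  sSup {k | ∃ c : V → ℕ, IsBColoring G k c}

/-- The chromatic number, as a natural number. -/
noncomputable def chromNum {V : Type u} (G : SimpleGraph V) : ℕ :=
  sInf {k | G.Colorable k}

/-- The maximum degree of a graph (degree measured by `Set.ncard` of the
neighbor set), as the supremum of all achieved degrees. -/
noncomputable def maxDeg {V : Type u} (G : SimpleGraph V) : ℕ :=
  sSup {d | ∃ v : V, (G.neighborSet v).ncard = d}

/-- The disjoint union `G1 ∪ G2` of two vertex-disjoint graphs, on the sum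
type: its edges are exactly the edges of `G1` together with those of `G2`. -/
def unionG {V1 : Type u} {V2 : Type v} (G1 : SimpleGraph V1) (G2 : SimpleGraph V2) :
    SimpleGraph (V1 ⊕ V2) :=
  SimpleGraph.fromRel (fun x y =>
    (∃ a b, x = Sum.inl a ∧ y = Sum.inl b ∧ G1.Adj a b) ∨
    (∃ a b, x = Sum.inr a ∧ y = Sum.inr b ∧ G2.Adj a b))

/-!
Call `v` nice for a `k`-coloring if it has the top color and, for every other color, a neighbor of
that color which itself sees all the colors but its own. A coloring is a z-coloring with `k` colors
exactly when it is greedy, uses colors below `k`, and has a nice vertex. The first two conditions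
can be tested separately on the two parts of a disjoint union; the third holds as soon as it holds
on one part, hence the maximum.

What remains is that the maxima are attained, i.e. that a nonempty graph of finite chromatic number
`n + 1` has a z-coloring with `n + 1` colors. By the De Bruijn–Erdős theorem the color `n` has to
appear inside some fixed finite vertex set `s`. Take a coloring where it appears there as few times
as possible, and make it greedy without raising any color. If `v ∈ s` has color `n` and is not nice,
then for some color `j` each of its neighbors of color `j` misses a color; moving these neighbors to
a color that they miss frees `j` for `v`, contradicting minimality.
-/

variable {V : Type u} {W : Type v} {G : SimpleGraph V} {H : SimpleGraph W}

/-! ### Greedy colorings and nice vertices -/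

/-- The set of colors seen by the vertex `v`. -/
def neighborColors {α : Type*} (G : SimpleGraph V) (c : V → α) (v : V) : Set α :=
  c '' G.neighborSet v

/-- A greedy coloring: the color of each vertex is the least one that its neighbors do not use.
The two halves of `IsLeast` are properness and the Grundy property. -/
def IsGreedyColoring (G : SimpleGraph V) (c : V → ℕ) : Prop :=
  ∀ v, IsLeast (neighborColors G c v)ᶜ (c v)

/-- A b-vertex (or color-dominating vertex) of a coloring with the colors `0, …, k - 1`: it sees
all of them but its own. -/
def IsBVertex (G : SimpleGraph V) (k : ℕ) (c : V → ℕ) (v : V) : Prop :=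
  ∀ i < k, i ≠ c v → i ∈ neighborColors G c v

/-- A nice vertex of a coloring with the colors `0, …, k - 1`: a vertex of the top color adjacent
to a b-vertex of every smaller color. It plays the role of `u (k - 1)` in `IsZColoring`. The top
color is given by `c v + 1 = k` so that there are no nice vertices for `k = 0`. -/
def IsNiceVertex (G : SimpleGraph V) (k : ℕ) (c : V → ℕ) (v : V) : Prop :=
  c v + 1 = k ∧ ∀ j < c v, ∃ w, G.Adj v w ∧ c w = j ∧ IsBVertex G k c w

/-- The z-spectrum of `G`: the numbers of colors of its z-colorings. Its maximum is `zNum G`. -/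
def zSpectrum (G : SimpleGraph V) : Set ℕ :=
  {k | ∃ c : V → ℕ, IsZColoring G k c}

theorem isGreedyColoring_iff {c : V → ℕ} :
    IsGreedyColoring G c ↔
      (∀ ⦃v w⦄, G.Adj v w → c v ≠ c w) ∧ ∀ v, ∀ i < c v, ∃ w, G.Adj v w ∧ c w = i := by
  refine ⟨fun h ↦ ⟨fun v w hvw hc ↦ (h v).1 ⟨w, hvw, hc.symm⟩, fun v i hi ↦ ?_⟩, fun h v ↦ ?_⟩
  · by_contra hvi
    exact hi.not_ge ((h v).2 hvi)
  · refine ⟨fun ⟨w, hvw, hc⟩ ↦ h.1 hvw hc.symm, fun i hvi ↦ ?_⟩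
    by_contra! hi
    exact hvi (h.2 v i hi)

theorem IsNiceVertex.isBVertex {k : ℕ} {c : V → ℕ} {v : V} (hv : IsNiceVertex G k c v) :
    IsBVertex G k c v := by
  intro i hi hiv
  obtain ⟨w, hvw, hw, -⟩ := hv.2 i (by grind [hv.1])
  exact ⟨w, hvw, hw⟩

theorem IsZColoring.exists_isNiceVertex {k : ℕ} {c : V → ℕ} (hc : IsZColoring G k c) :
    ∃ v, IsNiceVertex G k c v := by
  obtain ⟨hlt, -, -, -, u, hu, hadj, hdom⟩ := hc
  have hk : 0 < k := (Nat.zero_le _).trans_lt (hlt (u 0))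
  have htop : c (u (k - 1)) = k - 1 := hu _ (by lia)
  refine ⟨u (k - 1), by lia, fun j hj ↦ ?_⟩
  rw [htop] at hj
  have huj : c (u j) = j := hu j (by lia)
  exact ⟨u j, hadj j hj, huj, fun i hi hij ↦ hdom i hi j (by lia) (huj ▸ hij)⟩

theorem IsNiceVertex.exists_isBVertex_family {k : ℕ} {c : V → ℕ} {v : V}
    (hv : IsNiceVertex G k c v) :
    ∃ u : ℕ → V, (∀ j < k, c (u j) = j) ∧ (∀ j < k - 1, G.Adj (u (k - 1)) (u j)) ∧
      ∀ j, IsBVertex G k c (u j) := by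
  have : Nonempty V := ⟨v⟩
  have hk : c v + 1 = k := hv.1
  choose! b hadj hcolor hb using hv.2
  refine ⟨fun j ↦ if j < c v then b j else v, fun j hj ↦ ?_, fun j hj ↦ ?_, fun j ↦ ?_⟩
  · grind
  · have hj' : j < c v := by lia
    have hlast : ¬ k - 1 < c v := by lia
    simpa only [hj', hlast, if_true, if_false] using hadj j hj'
  · dsimp only
    split_ifs with hj
    exacts [hb j hj, hv.isBVertex]

theorem isZColoring_iff {k : ℕ} {c : V → ℕ} :
    IsZColoring G k c ↔
      (∀ v, c v < k) ∧ IsGreedyColoring G c ∧ ∃ v, IsNiceVertex G k c v := by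
  rw [isGreedyColoring_iff]
  refine ⟨fun hc ↦ ⟨hc.1, ⟨hc.2.1, hc.2.2.2.1⟩, hc.exists_isNiceVertex⟩, ?_⟩
  rintro ⟨hlt, ⟨hproper, hgrundy⟩, v, hv⟩
  obtain ⟨u, hu, hadj, hb⟩ := hv.exists_isBVertex_family
  exact ⟨hlt, hproper, fun i hi ↦ ⟨u i, hu i hi⟩, hgrundy, u, hu, hadj,
    fun i hi j hj hij ↦ hb j i hi (by rwa [hu j hj])⟩

theorem bddAbove_zSpectrum [Finite V] (G : SimpleGraph V) : BddAbove (zSpectrum G) := by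
  refine ⟨Nat.card V, ?_⟩
  rintro k ⟨c, -, -, hsurj, -⟩
  have hrange : Set.Iio k ⊆ Set.range c := hsurj
  calc k = (Set.Iio k).ncard := by simp
    _ ≤ (Set.range c).ncard := Set.ncard_le_ncard hrange
    _ ≤ Nat.card V := by
      rw [← Set.image_univ, ← Set.ncard_univ]
      exact Set.ncard_image_le

/-! ### Disjoint unions -/

section Sum

variable {k : ℕ} {c : V ⊕ W → ℕ}

theorem unionG_eq_sum (G : SimpleGraph V) (H : SimpleGraph W) : unionG G H = G ⊕g H := by
  ext (v | v) (w | w)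
  · simpa [unionG, G.adj_comm w v] using fun h : G.Adj v w ↦ h.ne
  · simp [unionG]
  · simp [unionG]
  · simpa [unionG, H.adj_comm w v] using fun h : H.Adj v w ↦ h.ne

theorem neighborColors_sum_inl (v : V) :
    neighborColors (G ⊕g H) c (.inl v) = neighborColors G (c ∘ .inl) v := by
  rw [neighborColors, neighborSet_sum_inl, ← Set.image_comp, neighborColors]

theorem neighborColors_sum_inr (w : W) :
    neighborColors (G ⊕g H) c (.inr w) = neighborColors H (c ∘ .inr) w := by
  rw [neighborColors, neighborSet_sum_inr, ← Set.image_comp, neighborColors]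

theorem isGreedyColoring_sum_iff :
    IsGreedyColoring (G ⊕g H) c ↔
      IsGreedyColoring G (c ∘ .inl) ∧ IsGreedyColoring H (c ∘ .inr) := by
  simp [IsGreedyColoring, neighborColors_sum_inl, neighborColors_sum_inr]

theorem isNiceVertex_sum_inl_iff {v : V} :
    IsNiceVertex (G ⊕g H) k c (.inl v) ↔ IsNiceVertex G k (c ∘ .inl) v := by
  simp [IsNiceVertex, IsBVertex, neighborColors_sum_inl]

theorem isNiceVertex_sum_inr_iff {w : W} :
    IsNiceVertex (G ⊕g H) k c (.inr w) ↔ IsNiceVertex H k (c ∘ .inr) w := by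
  simp [IsNiceVertex, IsBVertex, neighborColors_sum_inr]

theorem zSpectrum_sum_subset : zSpectrum (G ⊕g H) ⊆ zSpectrum G ∪ zSpectrum H := by
  rintro k ⟨c, hc⟩
  obtain ⟨hlt, hgreedy, v | w, hnice⟩ := isZColoring_iff.1 hc
  · exact .inl ⟨c ∘ .inl, isZColoring_iff.2 ⟨fun v ↦ hlt (.inl v),
      (isGreedyColoring_sum_iff.1 hgreedy).1, v, isNiceVertex_sum_inl_iff.1 hnice⟩⟩
  · exact .inr ⟨c ∘ .inr, isZColoring_iff.2 ⟨fun w ↦ hlt (.inr w),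
      (isGreedyColoring_sum_iff.1 hgreedy).2, w, isNiceVertex_sum_inr_iff.1 hnice⟩⟩

theorem max_mem_zSpectrum_sum {l : ℕ} (hk : k ∈ zSpectrum G) (hl : l ∈ zSpectrum H) :
    max k l ∈ zSpectrum (G ⊕g H) := by
  obtain ⟨c, hc⟩ := hk
  obtain ⟨d, hd⟩ := hl
  obtain ⟨hclt, hcgreedy, v, hv⟩ := isZColoring_iff.1 hc
  obtain ⟨hdlt, hdgreedy, w, hw⟩ := isZColoring_iff.1 hd
  refine ⟨Sum.elim c d, isZColoring_iff.2 ⟨?_, isGreedyColoring_sum_iff.2 ⟨hcgreedy, hdgreedy⟩, ?_⟩⟩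
  · rintro (v | w)
    exacts [lt_max_of_lt_left (hclt v), lt_max_of_lt_right (hdlt w)]
  · rcases max_choice k l with h | h <;> rw [h]
    exacts [⟨.inl v, isNiceVertex_sum_inl_iff.2 hv⟩, ⟨.inr w, isNiceVertex_sum_inr_iff.2 hw⟩]

theorem isGreatest_zSpectrum_sum {a b : ℕ} (hG : IsGreatest (zSpectrum G) a)
    (hH : IsGreatest (zSpectrum H) b) : IsGreatest (zSpectrum (G ⊕g H)) (max a b) :=
  ⟨max_mem_zSpectrum_sum hG.1 hH.1, fun _ hk ↦ (zSpectrum_sum_subset hk).elim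
    (fun hkG ↦ le_max_of_le_left (hG.2 hkG)) fun hkH ↦ le_max_of_le_right (hH.2 hkH)⟩

end Sum

/-! ### Existence of z-colorings -/

/-- The greedy recoloring of `G` in the order given by `c`: each vertex receives the least color not
used by its neighbors of smaller `c`-color. -/
noncomputable def greedyRecoloring (G : SimpleGraph V) (c : V → ℕ) (v : V) : ℕ :=
  sInf {i | ∀ w, G.Adj v w → c w < c v → greedyRecoloring G c w ≠ i}
termination_by c v

theorem greedyRecoloring_le (c : V → ℕ) (v : V) : greedyRecoloring G c v ≤ c v := by
  induction hn : c v using Nat.strong_induction_on generalizing v with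
  | _ n ih =>
    rw [greedyRecoloring]
    refine Nat.sInf_le fun w _ hwv ↦ ?_
    exact ((ih (c w) (hn ▸ hwv) w rfl).trans_lt (hn ▸ hwv)).ne

theorem greedyRecoloring_ne_of_lt (c : V → ℕ) {v w : V} (hvw : G.Adj v w) (hlt : c w < c v) :
    greedyRecoloring G c w ≠ greedyRecoloring G c v := by
  have hfree : {i | ∀ w, G.Adj v w → c w < c v → greedyRecoloring G c w ≠ i}.Nonempty :=
    ⟨c v, fun w _ hwv ↦ ((greedyRecoloring_le c w).trans_lt hwv).ne⟩
  have hmem := Nat.sInf_mem hfree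
  rw [← greedyRecoloring] at hmem
  exact hmem w hvw hlt

theorem isGreedyColoring_greedyRecoloring (c : G.Coloring ℕ) :
    IsGreedyColoring G (greedyRecoloring G c) := by
  refine isGreedyColoring_iff.2 ⟨fun v w hvw ↦ ?_, fun v i hi ↦ ?_⟩
  · rcases (c.valid hvw).lt_or_gt with hlt | hlt
    · exact greedyRecoloring_ne_of_lt c hvw.symm hlt
    · exact (greedyRecoloring_ne_of_lt c hvw hlt).symm
  · rw [greedyRecoloring] at hi
    have hi' := Nat.notMem_of_lt_sInf hi
    simp only [Set.mem_ofPred_eq] at hi'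
    push Not at hi'
    obtain ⟨w, hvw, -, hwi⟩ := hi'
    exact ⟨w, hvw, hwi⟩

theorem exists_isGreedyColoring_le (c : G.Coloring ℕ) :
    ∃ d : G.Coloring ℕ, IsGreedyColoring G d ∧ ∀ v, d v ≤ c v :=
  have hgreedy := isGreedyColoring_greedyRecoloring c
  ⟨.mk _ fun hvw ↦ (isGreedyColoring_iff.1 hgreedy).1 hvw, hgreedy, greedyRecoloring_le c⟩

open Classical in
/-- The coloring obtained from `c` by giving each vertex `v` of an independent set `s` a color `f v`
that none of its neighbors uses. -/
noncomputable def recolor {α : Type*} (c : G.Coloring α) {s : Set V} (hs : G.IsIndepSet s)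
    {f : V → α} (hf : ∀ v ∈ s, f v ∉ neighborColors G c v) : G.Coloring α :=
  .mk (s.piecewise f c) fun {v w} hvw hc ↦ by
    by_cases hv : v ∈ s <;> by_cases hw : w ∈ s <;> simp only [hv, hw, not_false_eq_true,
      Set.piecewise_eq_of_mem, Set.piecewise_eq_of_notMem] at hc
    · exact hs hv hw hvw.ne hvw
    · exact hf v hv ⟨w, hvw, hc.symm⟩
    · exact hf w hw ⟨v, hvw.symm, hc⟩
    · exact c.valid hvw hc

theorem recolor_of_mem {α : Type*} (c : G.Coloring α) {s : Set V} (hs : G.IsIndepSet s)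
    {f : V → α} (hf : ∀ v ∈ s, f v ∉ neighborColors G c v) {v : V} (hv : v ∈ s) :
    recolor c hs hf v = f v :=
  if_pos hv

theorem recolor_of_notMem {α : Type*} (c : G.Coloring α) {s : Set V} (hs : G.IsIndepSet s)
    {f : V → α} (hf : ∀ v ∈ s, f v ∉ neighborColors G c v) {v : V} (hv : v ∉ s) :
    recolor c hs hf v = c v :=
  if_neg hv

theorem exists_coloring_notMem_neighborColors {c : G.Coloring ℕ} {n j : ℕ} {v : V}
    (hc : ∀ w, c w ≤ n) (hv : c v = n)
    (hj : ∀ w, G.Adj v w → c w = j → ¬ IsBVertex G (n + 1) c w) :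
    ∃ d : G.Coloring ℕ, (∀ w, d w ≤ n) ∧ (∀ w, d w = n → c w = n) ∧
      j ∉ neighborColors G d v := by
  simp only [IsBVertex] at hj
  push Not at hj
  choose! f hf_lt hf_ne hf_free using hj
  let s : Set V := {w | G.Adj v w ∧ c w = j}
  have hs : G.IsIndepSet s := fun x hx y hy _ hxy ↦ c.valid hxy (hx.2.trans hy.2.symm)
  have hf : ∀ w ∈ s, f w ∉ neighborColors G c w := fun w hw ↦ hf_free w hw.1 hw.2
  have hf_lt_top : ∀ w ∈ s, f w < n := fun w hw ↦ by
    refine (Nat.lt_succ_iff.1 (hf_lt w hw.1 hw.2)).lt_of_ne fun hfw ↦ hf w hw ?_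
    exact ⟨v, hw.1.symm, hv.trans hfw.symm⟩
  refine ⟨recolor c hs hf, fun w ↦ ?_, fun w hw ↦ ?_, ?_⟩
  · by_cases hws : w ∈ s
    · exact (recolor_of_mem c hs hf hws).trans_le (hf_lt_top w hws).le
    · exact (recolor_of_notMem c hs hf hws).trans_le (hc w)
  · by_cases hws : w ∈ s
    · exact absurd ((recolor_of_mem c hs hf hws).symm.trans hw) (hf_lt_top w hws).ne
    · exact (recolor_of_notMem c hs hf hws).symm.trans hw
  · rintro ⟨w, hvw, hw⟩
    by_cases hws : w ∈ s
    · rw [recolor_of_mem c hs hf hws] at hw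
      exact hf_ne w hvw hws.2 (hw.trans hws.2.symm)
    · rw [recolor_of_notMem c hs hf hws] at hw
      exact hws ⟨hvw, hw⟩

theorem exists_coloring_of_not_isNiceVertex {c : G.Coloring ℕ} {n : ℕ} {v : V}
    (hc : ∀ w, c w ≤ n) (hv : c v = n) (hnice : ¬ IsNiceVertex G (n + 1) c v) :
    ∃ d : G.Coloring ℕ, (∀ w, d w ≤ n) ∧ (∀ w, d w = n → c w = n) ∧ d v ≠ n := by
  obtain ⟨j, hjn, hj⟩ : ∃ j < n, ∀ w, G.Adj v w → c w = j → ¬ IsBVertex G (n + 1) c w := by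
    simpa [IsNiceVertex, hv] using hnice
  obtain ⟨d, hd, hdc, hfree⟩ := exists_coloring_notMem_neighborColors hc hv hj
  have hindep : G.IsIndepSet {v} := Set.pairwise_singleton _ _
  have hfree' : ∀ w ∈ ({v} : Set V), j ∉ neighborColors G d w := by simpa using hfree
  have hself : recolor d hindep hfree' v = j := recolor_of_mem d hindep hfree' rfl
  have hother : ∀ w ≠ v, recolor d hindep hfree' w = d w :=
    fun w hw ↦ recolor_of_notMem d hindep hfree' hw
  refine ⟨recolor d hindep hfree', fun w ↦ ?_, fun w hw ↦ ?_, hself.trans_ne hjn.ne⟩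
  · rcases eq_or_ne w v with rfl | hwv
    · exact hself.trans_le hjn.le
    · exact (hother w hwv).trans_le (hd w)
  · rcases eq_or_ne w v with rfl | hwv
    · exact hv
    · exact hdc w ((hother w hwv).symm.trans hw)

theorem exists_finset_forall_coloring_exists_le {n : ℕ} (hn : ¬ G.Colorable n) :
    ∃ s : Finset V, ∀ c : G.Coloring ℕ, ∃ v ∈ s, n ≤ c v := by
  by_contra! h
  refine hn (nonempty_hom_of_forall_finite_subgraph_hom fun G' hG' ↦ ?_)
  choose c hc using h hG'.toFinset
  exact ⟨fun v ↦ ⟨c v, hc v (by simp)⟩, fun hvw heq ↦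
    c.valid (G'.adj_sub hvw) (congrArg Fin.val heq)⟩

theorem succ_mem_zSpectrum {n : ℕ} (hn : ¬ G.Colorable n) (hn' : G.Colorable (n + 1)) :
    n + 1 ∈ zSpectrum G := by
  classical
  obtain ⟨s, hs⟩ := exists_finset_forall_coloring_exists_le hn
  let topCount (c : G.Coloring ℕ) : ℕ := (s.filter fun v ↦ c v = n).card
  have hne : {c : G.Coloring ℕ | ∀ v, c v ≤ n}.Nonempty :=
    let ⟨c, hc⟩ := (colorable_iff_exists_bdd_nat_coloring _).1 hn'
    ⟨c, fun v ↦ Nat.lt_succ_iff.1 (hc v)⟩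
  obtain ⟨c, hc, hmin⟩ := (measure topCount).wf.has_min _ hne
  obtain ⟨d, hgreedy, hdc⟩ := exists_isGreedyColoring_le c
  have hd : ∀ v, d v ≤ n := fun v ↦ (hdc v).trans (hc v)
  have hd_top : ∀ v, d v = n → c v = n := fun v hv ↦ (hc v).antisymm (hv ▸ hdc v)
  obtain ⟨v, hvs, hnv⟩ := hs d
  have hv : d v = n := (hd v).antisymm hnv
  refine ⟨d, isZColoring_iff.2 ⟨fun w ↦ Nat.lt_succ_of_le (hd w), hgreedy, v, ?_⟩⟩
  by_contra hnice
  obtain ⟨e, he, hed, hev⟩ := exists_coloring_of_not_isNiceVertex hd hv hnice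
  refine hmin e he (Finset.card_lt_card (Finset.ssubset_iff_of_subset ?_ |>.2 ⟨v, ?_, ?_⟩))
  · exact Finset.monotone_filter_right s fun w _ hw ↦ hd_top w (hed w hw)
  · simp [hvs, hd_top v hv]
  · simp [hev]

theorem zSpectrum_nonempty [Nonempty V] (hG : G.chromaticNumber ≠ ⊤) : (zSpectrum G).Nonempty := by
  have h0 : ¬ G.Colorable 0 := by simp [colorable_zero_iff]
  obtain ⟨n, hn, hn'⟩ :=
    Nat.exists_not_and_succ_of_not_zero_of_exists h0 (chromaticNumber_ne_top_iff_exists.1 hG)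
  exact ⟨n + 1, succ_mem_zSpectrum hn hn'⟩

theorem isGreatest_zNum [Nonempty V] (hG : G.chromaticNumber ≠ ⊤) (hb : BddAbove (zSpectrum G)) :
    IsGreatest (zSpectrum G) (zNum G) :=
  ⟨Nat.sSup_mem (zSpectrum_nonempty hG) hb, fun _ hk ↦ le_csSup hb hk⟩

theorem zNum_union_general {V1 : Type u} {V2 : Type v} [Nonempty V1] [Nonempty V2]
    {G1 : SimpleGraph V1} {G2 : SimpleGraph V2}
    (hG1 : G1.chromaticNumber ≠ ⊤) (hG2 : G2.chromaticNumber ≠ ⊤)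
    (hb1 : BddAbove (zSpectrum G1)) (hb2 : BddAbove (zSpectrum G2)) :
    zNum (unionG G1 G2) = max (zNum G1) (zNum G2) := by
  rw [unionG_eq_sum]
  exact (isGreatest_zSpectrum_sum (isGreatest_zNum hG1 hb1) (isGreatest_zNum hG2 hb2)).csSup_eq

/-- for vertex-disjoint finite graphs `G1`, `G2`, each with at
least one vertex, `z(G1 ∪ G2) = max {z(G1), z(G2)}`. -/
theorem zNum_union {V1 : Type u} {V2 : Type v} [Fintype V1] [Fintype V2]
    [Nonempty V1] [Nonempty V2] (G1 : SimpleGraph V1) (G2 : SimpleGraph V2) :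
    zNum (unionG G1 G2) = max (zNum G1) (zNum G2) :=
  zNum_union_general (chromaticNumber_ne_top_iff_exists.2 ⟨_, G1.colorable_of_fintype⟩)
    (chromaticNumber_ne_top_iff_exists.2 ⟨_, G2.colorable_of_fintype⟩)
    (bddAbove_zSpectrum G1) (bddAbove_zSpectrum G2)
end

section
/- For every integer n ≥ 3, the graph G_n satisfies Γ(G_n) = 2n − 1, where Γ denotes the Grundy number. (Moreover Δ(G_n) = 2n − 2, so this attains the upper bound Γ(G_n) ≤ Δ(G_n) + 1.) -/
open SimpleGraph

universe u v

/-- Vertex set of the graph `Gₙ`: for each `i : Fin n` we have the core vertex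
`(i, Sum.inl ())` (this is `vᵢ = vₙⁱ`), the `n-1` further clique vertices
`(i, Sum.inr (Sum.inl j))` of `K(vᵢ)` (with `j = 0` being `v₁ⁱ`), and the
`n-1` pendant leaves `(i, Sum.inr (Sum.inr l))` attached to `v₁ⁱ`. -/
abbrev GnVert (n : ℕ) : Type := Fin n × (Unit ⊕ (Fin (n - 1) ⊕ Fin (n - 1)))

/-- The graph `Gₙ`: a complete graph `Kₙ` on the core vertices `v₁, …, vₙ`;
for each `i` a complete graph `K(vᵢ)` on `n` vertices containing `vᵢ`;
and `n - 1` pendant leaves attached to the vertex `v₁ⁱ` of each `K(vᵢ)`. -/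
def Gn (n : ℕ) : SimpleGraph (GnVert n) :=
  SimpleGraph.fromRel (fun x y =>
    -- the central clique on the `n` core vertices
    (x.1 ≠ y.1 ∧ x.2 = Sum.inl () ∧ y.2 = Sum.inl ()) ∨
    -- the clique `K(vᵢ)` on the core vertex together with the `n-1` others
    (x.1 = y.1 ∧
      (x.2 = Sum.inl () ∨ ∃ j, x.2 = Sum.inr (Sum.inl j)) ∧
      (y.2 = Sum.inl () ∨ ∃ j, y.2 = Sum.inr (Sum.inl j))) ∨
    -- the pendant leaves attached to `v₁ⁱ`
    (x.1 = y.1 ∧ (∃ j : Fin (n - 1), x.2 = Sum.inr (Sum.inl j) ∧ (j : ℕ) = 0) ∧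
      (∃ l, y.2 = Sum.inr (Sum.inr l))))

/-!
A vertex of color `j` in a Grundy coloring sees the `j` smaller colors on distinct neighbors, so
`Γ ≤ Δ + 1`. In `Gₙ` every non-core vertex only has neighbors among the `2n - 2` other vertices of
its own copy, while a core vertex has `n - 1` neighbors in each of its two cliques; hence
`Δ = 2n - 2`. The bound is attained by giving each `K(vᵢ) \ {vᵢ}` the colors `0, …, n - 2`, with
`0` on `v₁ⁱ` so that its leaves may all take color `1`, and then the core the colors
`n - 1, …, 2n - 2`.
-/

namespace IsGrundyColoring

variable {V : Type u} {G : SimpleGraph V} {k : ℕ} {c : V → ℕ}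

theorem apply_le_ncard_neighborSet (hc : IsGrundyColoring G k c) {v : V}
    (hv : (G.neighborSet v).Finite) : c v ≤ (G.neighborSet v).ncard := by
  obtain ⟨-, -, -, hgrundy⟩ := hc
  have hsub : Set.Iio (c v) ⊆ c '' G.neighborSet v := fun i hi => hgrundy v i hi
  calc c v = (Set.Iio (c v)).ncard := by simp
    _ ≤ (c '' G.neighborSet v).ncard := Set.ncard_le_ncard hsub (hv.image c)
    _ ≤ (G.neighborSet v).ncard := Set.ncard_image_le hv

theorem le_maxDeg_add_one (hc : IsGrundyColoring G k c)
    (hfin : ∀ v, (G.neighborSet v).Finite)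
    (hbdd : BddAbove {d | ∃ v : V, (G.neighborSet v).ncard = d}) : k ≤ maxDeg G + 1 := by
  rcases k with _ | k
  · exact Nat.zero_le _
  obtain ⟨v, rfl⟩ := hc.2.2.1 k k.lt_succ_self
  exact Nat.succ_le_succ ((hc.apply_le_ncard_neighborSet (hfin v)).trans (le_csSup hbdd ⟨v, rfl⟩))

theorem grundyNum_eq_maxDeg_add_one (hc : IsGrundyColoring G (maxDeg G + 1) c)
    (hfin : ∀ v, (G.neighborSet v).Finite)
    (hbdd : BddAbove {d | ∃ v : V, (G.neighborSet v).ncard = d}) :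
    grundyNum G = maxDeg G + 1 :=
  IsGreatest.csSup_eq ⟨⟨c, hc⟩, fun _ ⟨_, hc'⟩ => hc'.le_maxDeg_add_one hfin hbdd⟩

end IsGrundyColoring

namespace Gn

variable {n : ℕ}

section Adjacency

variable {i i' : Fin n} {j j' l l' : Fin (n - 1)}

@[simp]
theorem adj_core_core : (Gn n).Adj (i, .inl ()) (i', .inl ()) ↔ i ≠ i' := by
  grind [Gn, fromRel_adj]

@[simp]
theorem adj_core_clique : (Gn n).Adj (i, .inl ()) (i', .inr (.inl j)) ↔ i = i' := by
  grind [Gn, fromRel_adj]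

@[simp]
theorem adj_clique_core : (Gn n).Adj (i, .inr (.inl j)) (i', .inl ()) ↔ i = i' := by
  rw [adj_comm, adj_core_clique, eq_comm]

@[simp]
theorem not_adj_core_leaf : ¬ (Gn n).Adj (i, .inl ()) (i', .inr (.inr l)) := by
  simp [Gn]

@[simp]
theorem not_adj_leaf_core : ¬ (Gn n).Adj (i, .inr (.inr l)) (i', .inl ()) := by
  rw [adj_comm]; exact not_adj_core_leaf

@[simp]
theorem adj_clique_clique :
    (Gn n).Adj (i, .inr (.inl j)) (i', .inr (.inl j')) ↔ i = i' ∧ j ≠ j' := by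
  grind [Gn, fromRel_adj]

@[simp]
theorem adj_clique_leaf :
    (Gn n).Adj (i, .inr (.inl j)) (i', .inr (.inr l)) ↔ i = i' ∧ (j : ℕ) = 0 := by
  simp [Gn]

@[simp]
theorem adj_leaf_clique :
    (Gn n).Adj (i, .inr (.inr l)) (i', .inr (.inl j)) ↔ i = i' ∧ (j : ℕ) = 0 := by
  rw [adj_comm, adj_clique_leaf, eq_comm]

@[simp]
theorem not_adj_leaf_leaf : ¬ (Gn n).Adj (i, .inr (.inr l)) (i', .inr (.inr l')) := by
  simp [Gn]

end Adjacency

section Degree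

theorem neighborSet_core (i : Fin n) :
    (Gn n).neighborSet (i, .inl ()) =
      (fun i' => (i', .inl ())) '' {i}ᶜ ∪ Set.range fun j => (i, .inr (.inl j)) := by
  ext ⟨i', ⟨⟨⟩⟩ | j | l⟩ <;> simp [eq_comm]

theorem ncard_neighborSet_core (i : Fin n) :
    ((Gn n).neighborSet (i, .inl ())).ncard = 2 * n - 2 := by
  have hcore : ((fun i' => ((i', .inl ()) : GnVert n)) '' {i}ᶜ).ncard = n - 1 := by
    rw [Set.ncard_image_of_injective _ (Prod.mk_left_injective _), Set.ncard_compl]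
    simp
  have hclique : (Set.range fun j => ((i, .inr (.inl j)) : GnVert n)).ncard = n - 1 := by
    rw [Set.ncard_range_of_injective fun _ _ h => by simpa using h, Nat.card_fin]
  have hdisj : Disjoint ((fun i' => ((i', .inl ()) : GnVert n)) '' {i}ᶜ)
      (Set.range fun j => (i, .inr (.inl j))) := by
    rw [Set.disjoint_left]
    rintro _ ⟨_, _, rfl⟩ ⟨_, h⟩
    simp at h
  rw [neighborSet_core, Set.ncard_union_eq hdisj, hcore, hclique]
  omega

theorem fst_eq_of_adj_noncore {i : Fin n} {s : Fin (n - 1) ⊕ Fin (n - 1)} {w : GnVert n}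
    (h : (Gn n).Adj (i, .inr s) w) : w.1 = i := by
  obtain ⟨i', ⟨⟨⟩⟩ | j' | l'⟩ := w <;> obtain j | l := s <;> simp_all

theorem ncard_neighborSet_noncore_le (i : Fin n) (s : Fin (n - 1) ⊕ Fin (n - 1)) :
    ((Gn n).neighborSet (i, .inr s)).ncard ≤ 2 * n - 2 := by
  have hsub : (Gn n).neighborSet (i, .inr s) ⊆ Prod.mk i '' {.inr s}ᶜ := by
    rintro ⟨i', t⟩ h
    obtain rfl : i' = i := fst_eq_of_adj_noncore h
    exact ⟨t, fun ht => (Gn n).irrefl (ht ▸ h), rfl⟩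
  calc ((Gn n).neighborSet (i, .inr s)).ncard
      ≤ (Prod.mk i '' {(.inr s : Unit ⊕ (Fin (n - 1) ⊕ Fin (n - 1)))}ᶜ).ncard :=
        Set.ncard_le_ncard hsub
    _ = 2 * n - 2 := by
        rw [Set.ncard_image_of_injective _ (Prod.mk_right_injective _), Set.ncard_compl]
        simp only [Nat.card_eq_fintype_card, Fintype.card_sum, Fintype.card_unique,
          Fintype.card_fin, Set.ncard_singleton]
        omega

theorem isGreatest_degree (hn : 0 < n) :
    IsGreatest {d | ∃ v, ((Gn n).neighborSet v).ncard = d} (2 * n - 2) := by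
  refine ⟨⟨_, ncard_neighborSet_core ⟨0, hn⟩⟩, ?_⟩
  rintro _ ⟨⟨i, ⟨⟨⟩⟩ | s⟩, rfl⟩
  · exact (ncard_neighborSet_core i).le
  · exact ncard_neighborSet_noncore_le i s

end Degree

section Coloring

/-- A Grundy coloring of `Gₙ` with the maximum number of colors, witnessing the lower bound on
`Γ(Gₙ)`. Colors and core vertices are indexed from `0`. -/
def coloring (n : ℕ) : GnVert n → ℕ
  | (i, .inl _) => n - 1 + i
  | (_, .inr (.inl j)) => j
  | (_, .inr (.inr _)) => 1

theorem coloring_lt (v : GnVert n) : coloring n v < 2 * n - 1 := by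
  obtain ⟨i, _ | j | l⟩ := v <;> simp only [coloring]
  · omega
  · omega
  · have := l.pos
    omega

theorem coloring_ne_of_adj {v w : GnVert n} (h : (Gn n).Adj v w) :
    coloring n v ≠ coloring n w := by
  obtain ⟨i, ⟨⟨⟩⟩ | j | l⟩ := v <;> obtain ⟨i', ⟨⟨⟩⟩ | j' | l'⟩ := w <;>
    simp only [adj_core_core, adj_core_clique, adj_clique_core, adj_clique_clique, adj_clique_leaf,
      adj_leaf_clique, not_adj_core_leaf, not_adj_leaf_core, not_adj_leaf_leaf] at h <;>
    simp only [coloring] <;> omega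

theorem exists_coloring_eq {a : ℕ} (ha : a < 2 * n - 1) : ∃ v, coloring n v = a := by
  by_cases h : a < n - 1
  · exact ⟨(⟨0, by omega⟩, .inr (.inl ⟨a, h⟩)), rfl⟩
  · exact ⟨(⟨a - (n - 1), by omega⟩, .inl ()), Nat.add_sub_of_le (not_lt.mp h)⟩

theorem exists_adj_coloring_eq {v : GnVert n} {a : ℕ} (ha : a < coloring n v) :
    ∃ w, (Gn n).Adj v w ∧ coloring n w = a := by
  obtain ⟨i, ⟨⟨⟩⟩ | j | l⟩ := v <;> simp only [coloring] at ha
  · by_cases h : a < n - 1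
    · exact ⟨(i, .inr (.inl ⟨a, h⟩)), adj_core_clique.mpr rfl, rfl⟩
    · refine ⟨(⟨a - (n - 1), by omega⟩, .inl ()), adj_core_core.mpr ?_,
        Nat.add_sub_of_le (not_lt.mp h)⟩
      exact Fin.ne_of_gt (Nat.sub_lt_left_of_lt_add (not_lt.mp h) ha)
  · exact ⟨(i, .inr (.inl ⟨a, ha.trans j.isLt⟩)),
      adj_clique_clique.mpr ⟨rfl, (Fin.ne_of_lt ha).symm⟩, rfl⟩
  · exact ⟨(i, .inr (.inl ⟨0, l.pos⟩)), adj_leaf_clique.mpr ⟨rfl, rfl⟩,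
      (Nat.lt_one_iff.mp ha).symm⟩

theorem isGrundyColoring_coloring (n : ℕ) : IsGrundyColoring (Gn n) (2 * n - 1) (coloring n) :=
  ⟨coloring_lt, fun _ _ => coloring_ne_of_adj, fun _ => exists_coloring_eq,
    fun _ _ => exists_adj_coloring_eq⟩

end Coloring

end Gn

theorem grundyNum_Gn_general (n : ℕ) (hn : 0 < n) :
    grundyNum (Gn n) = 2 * n - 1 ∧ maxDeg (Gn n) = 2 * n - 2 := by
  have hΔ : maxDeg (Gn n) = 2 * n - 2 := (Gn.isGreatest_degree hn).csSup_eq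
  have hcolors : 2 * n - 1 = maxDeg (Gn n) + 1 := by omega
  have hc : IsGrundyColoring (Gn n) (maxDeg (Gn n) + 1) (Gn.coloring n) :=
    hcolors ▸ Gn.isGrundyColoring_coloring n
  have hΓ : grundyNum (Gn n) = maxDeg (Gn n) + 1 :=
    hc.grundyNum_eq_maxDeg_add_one (fun _ => Set.toFinite _) (Gn.isGreatest_degree hn).bddAbove
  exact ⟨hΓ.trans hcolors.symm, hΔ⟩

/-- for every `n ≥ 3`, the Grundy number of `Gₙ` is `2n - 1`;
moreover `Δ(Gₙ) = 2n - 2`, so this attains the bound `Γ(G) ≤ Δ(G) + 1`. -/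
theorem grundyNum_Gn (n : ℕ) (hn : 3 ≤ n) :
    grundyNum (Gn n) = 2 * n - 1 ∧ maxDeg (Gn n) = 2 * n - 2 := by
  exact grundyNum_Gn_general n (by omega)
end

section
/- For every integer n ≥ 3, the graph G_n satisfies z(G_n) = χ(G_n) = n, where z denotes the z-chromatic number and χ the chromatic number. -/
open SimpleGraph

universe u v

/-! A `k`-colorable finite graph with a `k`-clique has a z-coloring with `k` colors: a pointwise
minimal proper coloring is Grundy, and the vertices of the clique serve as `u₁, …, u_k`. Hence
`z(Gₙ) ≥ n`. For the upper bound, the neighbors of a leaf of `Gₙ` form a subset of the neighbors of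
any vertex of `K(vᵢ)` other than `vᵢ` and `v₁ⁱ`, so in a Grundy coloring the color of the leaf
already occurs on `K(vᵢ)`. A vertex outside the core that sees all other colors therefore
forces all colors to occur on the `n` vertices of its `K(vᵢ)`; if there is no such vertex, then all
colors occur on the `n` core vertices. -/

section General

variable {V : Type u} {G : SimpleGraph V} {c : V → ℕ} {k : ℕ}

theorem IsZColoring.isGrundyColoring (hc : IsZColoring G k c) : IsGrundyColoring G k c :=
  ⟨hc.1, hc.2.1, hc.2.2.1, hc.2.2.2.1⟩

theorem IsZColoring.isBColoring (hc : IsZColoring G k c) : IsBColoring G k c := by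
  obtain ⟨hlt, hproper, -, -, u, hu, -, hsees⟩ := hc
  exact ⟨hlt, hproper, fun i hi => ⟨u i, hu i hi, fun j hj hji => hsees j hj i hi hji⟩⟩

/-- A Grundy coloring viewed as a coloring in the sense of Mathlib, with colors in `Fin k`. -/
def IsGrundyColoring.toColoring (hc : IsGrundyColoring G k c) : G.Coloring (Fin k) :=
  Coloring.mk (fun v => ⟨c v, hc.1 v⟩) fun h heq => hc.2.1 h (congrArg Fin.val heq)

theorem IsGrundyColoring.exists_mem_color_eq_of_isNClique (hc : IsGrundyColoring G k c)
    {s : Finset V} (hs : G.IsNClique k s) {i : ℕ} (hi : i < k) : ∃ v ∈ s, c v = i := by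
  obtain ⟨v, hv, hvi⟩ := hc.toColoring.surjOn_of_card_le_isClique hs.isClique
    (by simp [hs.card_eq]) (Set.mem_univ ⟨i, hi⟩)
  exact ⟨v, hv, congrArg Fin.val hvi⟩

theorem IsGrundyColoring.isZColoring_of_isNClique [Nonempty V] (hc : IsGrundyColoring G k c)
    {s : Finset V} (hs : G.IsNClique k s) : IsZColoring G k c := by
  choose! u hus hu using fun i (hi : i < k) => hc.exists_mem_color_eq_of_isNClique hs hi
  have hadj : ∀ i < k, ∀ j < k, i ≠ j → G.Adj (u i) (u j) := fun i hi j hj hij =>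
    hs.isClique (hus i hi) (hus j hj) fun h => hij (by rw [← hu i hi, h, hu j hj])
  obtain ⟨hlt, hproper, hsurj, hgrundy⟩ := hc
  exact ⟨hlt, hproper, hsurj, hgrundy, u, hu,
    fun j hj => hadj (k - 1) (by omega) j (by omega) (by omega),
    fun i hi j hj hij => ⟨u i, hadj j hj i hi hij.symm, hu i hi⟩⟩

theorem exists_adj_color_eq_of_minimal
    (hc : Minimal (fun c : V → ℕ => ∀ ⦃x y⦄, G.Adj x y → c x ≠ c y) c) {v : V} {i : ℕ}
    (hi : i < c v) : ∃ w, G.Adj v w ∧ c w = i := by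
  classical
  by_contra! hfree
  refine hc.not_prop_of_lt (update_lt_self_iff.2 hi) fun x y hxy => ?_
  rcases eq_or_ne x v with rfl | hx
  · simpa [hxy.ne'] using (hfree y hxy).symm
  · rcases eq_or_ne y v with rfl | hy
    · simpa [hx] using hfree x hxy.symm
    · simpa [hx, hy] using hc.prop hxy

theorem exists_isGrundyColoring_of_colorable [Finite V] (hG : G.Colorable k) :
    ∃ m ≤ k, ∃ c, IsGrundyColoring G m c := by
  obtain ⟨C⟩ := hG
  obtain ⟨c, hcC, hc⟩ := exists_minimal_le_of_wellFoundedLT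
    (fun c : V → ℕ => ∀ ⦃x y⦄, G.Adj x y → c x ≠ c y) (fun v => C v)
    fun _ _ hxy h => C.valid hxy (Fin.ext h)
  rcases isEmpty_or_nonempty V with _ | _
  · exact ⟨0, k.zero_le, c, isEmptyElim, isEmptyElim, by simp, isEmptyElim⟩
  obtain ⟨v, hv⟩ := Finite.exists_max c
  refine ⟨c v + 1, (hcC v).trans_lt (C v).isLt, c, fun w => Nat.lt_succ_of_le (hv w), hc.prop,
    fun i hi => ?_, fun _ _ => exists_adj_color_eq_of_minimal hc⟩
  rcases Nat.lt_succ_iff_lt_or_eq.1 hi with hlt | rfl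
  · obtain ⟨w, -, hw⟩ := exists_adj_color_eq_of_minimal hc hlt
    exact ⟨w, hw⟩
  · exact ⟨v, rfl⟩

theorem exists_isZColoring_of_colorable_of_isNClique [Finite V] [Nonempty V] (hG : G.Colorable k)
    {s : Finset V} (hs : G.IsNClique k s) : ∃ c, IsZColoring G k c := by
  obtain ⟨m, hmk, c, hc⟩ := exists_isGrundyColoring_of_colorable hG
  have hkm : k ≤ m := hs.card_eq ▸ hs.isClique.card_le_of_colorable ⟨hc.toColoring⟩
  obtain rfl : m = k := hmk.antisymm hkm
  exact ⟨c, hc.isZColoring_of_isNClique hs⟩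

theorem chromNum_eq_of_colorable_of_isNClique (hG : G.Colorable k) {s : Finset V}
    (hs : G.IsNClique k s) : chromNum G = k :=
  IsLeast.csInf_eq ⟨hG, fun _ hm => hs.card_eq ▸ hs.isClique.card_le_of_colorable hm⟩

theorem IsGrundyColoring.color_mem_image_insert_of_neighborSet_subset (hc : IsGrundyColoring G k c)
    {v w : V} (hvw : G.neighborSet v ⊆ G.neighborSet w) :
    c v ∈ c '' insert w (G.neighborSet w) := by
  obtain ⟨-, hproper, -, hgrundy⟩ := hc
  rcases lt_trichotomy (c v) (c w) with hlt | heq | hgt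
  · obtain ⟨x, hx, hxv⟩ := hgrundy w _ hlt
    exact ⟨x, .inr hx, hxv⟩
  · exact ⟨w, .inl rfl, heq.symm⟩
  · obtain ⟨x, hx, hxw⟩ := hgrundy v _ hgt
    exact absurd hxw.symm (hproper (hvw hx))

end General

section Gn

variable {n : ℕ}

/-- The central clique of `Gₙ`, with vertices `v₁, …, vₙ`. -/
def coreClique (n : ℕ) : Finset (GnVert n) :=
  Finset.univ ×ˢ {.inl ()}

/-- The clique `K(vᵢ)` of `Gₙ`, including the core vertex `vᵢ`. -/
def blockClique (i : Fin n) : Finset (GnVert n) :=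
  {i} ×ˢ Finset.univ.disjSum (Finset.univ.disjSum ∅)

theorem mem_coreClique {x : GnVert n} : x ∈ coreClique n ↔ x.2 = .inl () := by
  rw [coreClique, Finset.mem_product]
  simp

theorem mem_blockClique {i : Fin n} {x : GnVert n} :
    x ∈ blockClique i ↔ x.1 = i ∧ (x.2 = .inl () ∨ ∃ a, x.2 = .inr (.inl a)) := by
  rw [blockClique, Finset.mem_product]
  rcases x with ⟨j, _ | a | l⟩ <;> simp

theorem isNClique_coreClique (n : ℕ) : (Gn n).IsNClique n (coreClique n) := by
  refine ⟨fun x hx y hy hxy => ?_, by simp [coreClique]⟩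
  grind [Gn, fromRel_adj, mem_coreClique]

theorem isNClique_blockClique (i : Fin n) : (Gn n).IsNClique n (blockClique i) := by
  refine ⟨fun x hx y hy hxy => ?_, ?_⟩
  · grind [Gn, fromRel_adj, mem_blockClique]
  · have hcard : 1 + (n - 1) = n := Nat.add_sub_cancel' i.pos
    simpa [blockClique] using hcard

theorem fst_eq_of_adj_of_notMem_coreClique {x y : GnVert n} (hxy : (Gn n).Adj x y)
    (hx : x ∉ coreClique n) : y.1 = x.1 := by
  grind [Gn, fromRel_adj, mem_coreClique]

theorem exists_eq_of_adj_leaf {i : Fin n} {l : Fin (n - 1)} {x : GnVert n}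
    (hx : (Gn n).Adj (i, .inr (.inr l)) x) :
    ∃ a : Fin (n - 1), (a : ℕ) = 0 ∧ x = (i, .inr (.inl a)) := by
  grind [Gn, fromRel_adj]

theorem mem_blockClique_of_adj_of_ne_zero {i : Fin n} {a : Fin (n - 1)} (ha : (a : ℕ) ≠ 0)
    {x : GnVert n} (hx : (Gn n).Adj (i, .inr (.inl a)) x) : x ∈ blockClique i := by
  grind [Gn, fromRel_adj, mem_blockClique]

theorem colorable_Gn (n : ℕ) : (Gn n).Colorable n := by
  obtain _ | m := n
  · exact .of_isEmpty _
  -- `i.succAbove` enumerates the colors other than the color `i` of `vᵢ`, so leaves can take `i`.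
  refine ⟨Coloring.mk (fun
    | (i, .inl _) | (i, .inr (.inr _)) => i
    | (i, .inr (.inl a)) => i.succAbove a) ?_⟩
  rintro ⟨i, _ | a | l⟩ ⟨j, _ | b | l'⟩ h <;>
    grind [Gn, fromRel_adj, Fin.succAbove_ne, Fin.succAbove_right_inj]

theorem IsGrundyColoring.color_mem_image_blockClique (hn : 3 ≤ n) {k : ℕ} {c : GnVert n → ℕ}
    (hc : IsGrundyColoring (Gn n) k c) (x : GnVert n) : c x ∈ (blockClique x.1).image c := by
  obtain ⟨i, x⟩ := x
  obtain _ | a | l := x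
  · exact Finset.mem_image_of_mem c (by simp [mem_blockClique])
  · exact Finset.mem_image_of_mem c (by simp [mem_blockClique])
  -- `w` is `v₂ⁱ`, since the index `0` stands for `v₁ⁱ`.
  let w : GnVert n := (i, .inr (.inl ⟨1, by omega⟩))
  have hsub : (Gn n).neighborSet (i, .inr (.inr l)) ⊆ (Gn n).neighborSet w := by
    intro y hy
    obtain ⟨a, ha, rfl⟩ := exists_eq_of_adj_leaf hy
    exact (isNClique_blockClique i).isClique (by simp [w, mem_blockClique])
      (by simp [mem_blockClique]) (by grind)
  obtain ⟨y, hy, hcy⟩ := hc.color_mem_image_insert_of_neighborSet_subset hsub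
  refine Finset.mem_image.2 ⟨y, ?_, hcy⟩
  rcases hy with rfl | hy
  · simp [w, mem_blockClique]
  · exact mem_blockClique_of_adj_of_ne_zero one_ne_zero hy

theorem IsGrundyColoring.le_of_isBColoring_Gn (hn : 3 ≤ n) {k : ℕ} {c : GnVert n → ℕ}
    (hc : IsGrundyColoring (Gn n) k c) (hb : IsBColoring (Gn n) k c) : k ≤ n := by
  suffices h : ∃ s, (Gn n).IsNClique n s ∧ Finset.range k ⊆ s.image c by
    obtain ⟨s, hs, hks⟩ := h
    simpa [hs.card_eq] using (Finset.card_le_card hks).trans Finset.card_image_le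
  by_cases hcore : Finset.range k ⊆ (coreClique n).image c
  · exact ⟨_, isNClique_coreClique n, hcore⟩
  obtain ⟨j, hj, hj_core⟩ := Finset.not_subset.1 hcore
  obtain ⟨v, rfl, hv⟩ := hb.2.2 j (Finset.mem_range.1 hj)
  have hv_core : v ∉ coreClique n := fun h => hj_core (Finset.mem_image_of_mem c h)
  refine ⟨_, isNClique_blockClique v.1, fun t ht => ?_⟩
  rcases eq_or_ne t (c v) with rfl | htv
  · exact hc.color_mem_image_blockClique hn v
  · obtain ⟨w, hvw, rfl⟩ := hv t (Finset.mem_range.1 ht) htv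
    exact fst_eq_of_adj_of_notMem_coreClique hvw hv_core ▸ hc.color_mem_image_blockClique hn w

end Gn

/-- for every `n ≥ 3`, `z(Gₙ) = χ(Gₙ) = n`. -/
theorem zNum_Gn (n : ℕ) (hn : 3 ≤ n) :
    zNum (Gn n) = n ∧ chromNum (Gn n) = n := by
  have : Nonempty (GnVert n) := ⟨⟨0, by omega⟩, .inl ()⟩
  have hcol := colorable_Gn n
  have hcore := isNClique_coreClique n
  refine ⟨IsGreatest.csSup_eq ⟨exists_isZColoring_of_colorable_of_isNClique hcol hcore, ?_⟩,
    chromNum_eq_of_colorable_of_isNClique hcol hcore⟩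
  rintro k ⟨c, hc⟩
  exact hc.isGrundyColoring.le_of_isBColoring_Gn hn hc.isBColoring
end

section
/- Let T be a finite tree and v any vertex of T. Then z(T − v) ≤ z(T), where T − v is the graph obtained by deleting v (and its incident edges) from T. -/
open SimpleGraph

universe u v

/-!
Call a coloring by natural numbers *proper* if adjacent vertices get different colors. Pointwise
minimal proper colorings are exactly the Grundy ones: if a vertex misses a smaller color among its
neighbors it can be lowered to that color, and conversely a Grundy coloring leaves no room to lower
any vertex. Hence if a z-coloring of a graph `H` mapping to `G` is the pullback of a proper coloring
of `G` with the same colors, then lowering the latter to a minimal one gives a Grundy coloring of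
`G` that still pulls back to the z-coloring of `H`, whose witnesses then serve for `G`.

Let all edges at `v` be bridges, so that `v` has at most one neighbor in each component of `G - v`.
Take a z-coloring of `G - v` with at least two colors and the component `C` containing its
witnesses. Give `v` one of the colors `0`, `1` that is not the color of its neighbor in `C`, and
swap `0` and `1` in the other components where this conflicts: the result is proper on `G` and
unchanged on `C`. With at most one color `G - v` is edgeless, so `G` has a proper coloring by `0`
and `1`, and pulling back along an edge or a vertex gives a z-coloring of `G`.
-/

/-- A proper coloring of `G` by natural numbers, as a bare function so that colorings are ordered
pointwise. -/
def IsProper {V : Type*} (G : SimpleGraph V) (c : V → ℕ) : Prop :=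
  ∀ ⦃x y : V⦄, G.Adj x y → c x ≠ c y

section Proper

variable {V W : Type*} {G : SimpleGraph V} {H : SimpleGraph W} {c d : V → ℕ}

theorem IsProper.comp_hom (hd : IsProper G d) (f : H →g G) : IsProper H (d ∘ f) :=
  fun _ _ hxy => hd (f.map_adj hxy)

theorem isProper_sInf_of_directedOn {S : Set (V → ℕ)} (hne : S.Nonempty)
    (hdir : DirectedOn (· ≥ ·) S) (hS : ∀ c ∈ S, IsProper G c) : IsProper G (sInf S) := by
  have : Nonempty S := hne.to_subtype
  have exists_eq (x : V) : ∃ c ∈ S, c x = sInf S x := by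
    obtain ⟨c, hc⟩ := ciInf_mem fun c : S => c.1 x
    exact ⟨c, c.2, hc.trans (sInf_apply ..).symm⟩
  intro x y hxy
  obtain ⟨c, hcS, hcx⟩ := exists_eq x
  obtain ⟨d, hdS, hdy⟩ := exists_eq y
  obtain ⟨e, heS, hec, hed⟩ := hdir c hcS d hdS
  have hle : sInf S ≤ e := csInf_le (OrderBot.bddBelow S) heS
  have hex : e x = sInf S x := ((hec x).trans_eq hcx).antisymm (hle x)
  have hey : e y = sInf S y := ((hed y).trans_eq hdy).antisymm (hle y)
  exact hex ▸ hey ▸ hS e heS hxy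

theorem IsProper.exists_minimal_le (hd : IsProper G d) : ∃ e ≤ d, Minimal (IsProper G) e := by
  refine zorn_le_nonempty₀ (α := (V → ℕ)ᵒᵈ) {c | IsProper G c} (fun S hS hchain c hc => ?_) d hd
  exact ⟨sInf (α := V → ℕ) S,
    isProper_sInf_of_directedOn ⟨c, hc⟩ hchain.directedOn hS,
    fun e he => csInf_le (α := V → ℕ) (OrderBot.bddBelow (α := V → ℕ) S) he⟩

theorem minimal_isProper_iff :
    Minimal (IsProper G) c ↔ IsProper G c ∧ ∀ x, ∀ i < c x, ∃ w, G.Adj x w ∧ c w = i := by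
  classical
  refine ⟨fun hc => ⟨hc.prop, fun x i hi => ?_⟩, fun ⟨hc, hgrundy⟩ => ⟨hc, fun e he hle => ?_⟩⟩
  · by_contra! hmiss
    have hproper : IsProper G (Function.update c x i) := by
      intro y z hyz
      rcases eq_or_ne y x with rfl | hy
      · simpa [Function.update_of_ne hyz.ne'] using (hmiss z hyz).symm
      rcases eq_or_ne z x with rfl | hz
      · simpa [Function.update_of_ne hy] using hmiss y hyz.symm
      simpa [Function.update_of_ne hy, Function.update_of_ne hz] using hc.prop hyz
    have hlower : Function.update c x i ≤ c := update_le_self_iff.2 hi.le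
    exact hi.not_ge (by simpa using hc.le_of_le hproper hlower x)
  · suffices ∀ n x, c x = n → e x = n from fun x => (this _ x rfl).ge
    intro n
    induction n using Nat.strong_induction_on with
    | _ n ih =>
      rintro x rfl
      refine (hle x).eq_of_not_lt fun hlt => ?_
      obtain ⟨w, hxw, hcw⟩ := hgrundy x (e x) hlt
      exact he hxw (ih (e x) hlt w hcw).symm

end Proper

section ZColoring

variable {V W : Type*} {G : SimpleGraph V} {H : SimpleGraph W} {k : ℕ}

theorem bddAbove_setOf_isZColoring [Finite V] (G : SimpleGraph V) :
    BddAbove {k | ∃ c : V → ℕ, IsZColoring G k c} := by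
  refine ⟨Nat.card V, ?_⟩
  rintro k ⟨c, -, -, -, -, u, hcu, -, -⟩
  have hinj : Function.Injective fun i : Fin k => u i := fun i j hij =>
    Fin.ext <| by simpa [hcu] using congrArg c hij
  simpa using Nat.card_le_card_of_injective _ hinj

theorem isZColoring_top (n : ℕ) :
    IsZColoring (⊤ : SimpleGraph (Fin (n + 1))) (n + 1) Fin.val := by
  have val_ofNat {j : ℕ} (hj : j < n + 1) : (Fin.ofNat (n + 1) j).val = j := Nat.mod_eq_of_lt hj
  refine ⟨Fin.is_lt, fun x y => by simp [Fin.val_inj], fun i hi => ⟨⟨i, hi⟩, rfl⟩,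
    fun x i hi => ⟨⟨i, by lia⟩, ?_, rfl⟩, Fin.ofNat (n + 1), fun j hj => val_ofNat hj,
    fun j hj => ?_, fun i hi j hj hij => ⟨⟨i, hi⟩, ?_, rfl⟩⟩
  · exact (top_adj _ _).2 (Fin.ne_of_val_ne hi.ne')
  · refine (top_adj _ _).2 (Fin.ne_of_val_ne ?_)
    rw [val_ofNat (by lia), val_ofNat (by lia)]
    lia
  · refine (top_adj _ _).2 (Fin.ne_of_val_ne ?_)
    rw [val_ofNat hj]
    exact hij.symm

namespace IsZColoring

theorem exists_of_hom {c : W → ℕ} {d : V → ℕ} (hc : IsZColoring H k c) (f : H →g G)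
    (hd : IsProper G d) (hdk : ∀ x, d x < k) (hdf : d ∘ f = c) : ∃ e, IsZColoring G k e := by
  obtain ⟨-, hproper, hsurj, hgrundy, u, hcu, hadj, hb⟩ := hc
  obtain ⟨e, hed, he⟩ := hd.exists_minimal_le
  have hef : e ∘ f = c :=
    (minimal_isProper_iff.2 ⟨hproper, hgrundy⟩).eq_of_le (he.prop.comp_hom f)
      (hdf ▸ fun x => hed (f x))
  have hef' (x : W) : e (f x) = c x := congrFun hef x
  refine ⟨e, fun x => (hed x).trans_lt (hdk x), he.prop, fun i hi => ?_,
    (minimal_isProper_iff.1 he).2, f ∘ u, fun j hj => (hef' _).trans (hcu j hj),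
    fun j hj => f.map_adj (hadj j hj), fun i hi j hj hij => ?_⟩
  · obtain ⟨x, hx⟩ := hsurj i hi
    exact ⟨f x, (hef' x).trans hx⟩
  · obtain ⟨w, hw, hcw⟩ := hb i hi j hj hij
    exact ⟨f w, f.map_adj hw, (hef' w).trans hcw⟩

theorem exists_connectedComponent {c : V → ℕ} (hc : IsZColoring G k c) :
    ∃ C : G.ConnectedComponent, IsZColoring C.toSimpleGraph k (c ∘ Subtype.val) := by
  obtain ⟨hck, hproper, -, hgrundy, u, hcu, hadj, hb⟩ := hc
  let C := G.connectedComponentMk (u (k - 1))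
  have mem_of_adj {x y : V} (hx : x ∈ C.supp) (hxy : G.Adj x y) : y ∈ C.supp :=
    (C.mem_supp_congr_adj hxy).1 hx
  have hu (j : ℕ) (hj : j < k) : u j ∈ C.supp := by
    rcases eq_or_ne j (k - 1) with rfl | hne
    · rfl
    · exact mem_of_adj rfl (hadj j (by lia))
  have exists_adj (x : C) {i : ℕ} (h : ∃ w, G.Adj x w ∧ c w = i) :
      ∃ w, C.toSimpleGraph.Adj x w ∧ (c ∘ Subtype.val) w = i := by
    obtain ⟨w, hxw, hcw⟩ := h
    exact ⟨⟨w, mem_of_adj x.2 hxw⟩, hxw, hcw⟩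
  have exists_lift (j : ℕ) : ∃ x : C, j < k → x = u j := by
    by_cases hj : j < k
    · exact ⟨⟨u j, hu j hj⟩, fun _ => rfl⟩
    · exact ⟨⟨u (k - 1), rfl⟩, fun h => absurd h hj⟩
  choose u' hu' using exists_lift
  have hcu' (j : ℕ) (hj : j < k) : (c ∘ Subtype.val) (u' j) = j := by
    rw [Function.comp_apply, hu' j hj, hcu j hj]
  refine ⟨C, fun x => hck x, fun x y hxy => hproper hxy, fun i hi => ⟨u' i, hcu' i hi⟩,
    fun x i hi => exists_adj x (hgrundy x i hi), u', hcu', fun j hj => ?_,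
    fun i hi j hj hij => exists_adj (u' j) (hu' j hj ▸ hb i hi j hj hij)⟩
  change G.Adj (u' (k - 1)) (u' j)
  rw [hu' (k - 1) (by lia), hu' j (by lia)]
  exact hadj j hj

end IsZColoring

theorem IsProper.exists_isZColoring_of_lt_two [Nonempty V] {d : V → ℕ} (hd : IsProper G d)
    (hd2 : ∀ x, d x < 2) : ∃ m ≥ 1, ∃ e, IsZColoring G m e := by
  by_cases h : ∃ x y, G.Adj x y
  · obtain ⟨x, y, hxy, hlt⟩ : ∃ x y, G.Adj x y ∧ d x < d y := by
      obtain ⟨x, y, hxy⟩ := h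
      rcases (hd hxy).lt_or_gt with hlt | hlt
      exacts [⟨x, y, hxy, hlt⟩, ⟨y, x, hxy.symm, hlt⟩]
    have hdy := hd2 y
    let f : (⊤ : SimpleGraph (Fin 2)) →g G :=
      ⟨![x, y], fun {i j} hij => by fin_cases i <;> fin_cases j <;> simp_all [hxy.symm]⟩
    refine ⟨2, one_le_two, (isZColoring_top 1).exists_of_hom f hd hd2 (funext fun i => ?_)⟩
    fin_cases i <;> simp [f] <;> lia
  · push Not at h
    let f : (⊤ : SimpleGraph (Fin 1)) →g G :=
      ⟨fun _ => Classical.arbitrary V, fun hij => absurd (Subsingleton.elim _ _) hij.ne⟩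
    have hproper : IsProper G 0 := fun x y hxy => absurd hxy (h x y)
    refine ⟨1, le_rfl, (isZColoring_top 0).exists_of_hom f hproper (fun _ => one_pos) ?_⟩
    exact funext fun i => by simp

end ZColoring

section Recoloring

variable {V : Type*} {G : SimpleGraph V} {N : Set V} {a b : ℕ} {c : V → ℕ}

open Classical in
/-- The coloring obtained from `c` by swapping the colors `a` and `b` on every component of `G`
in which some vertex of `N` has color `a`. If `N` has at most one vertex in each component, this
frees `N` from the color `a`. -/
noncomputable def swapColors (G : SimpleGraph V) (N : Set V) (a b : ℕ) (c : V → ℕ) (x : V) : ℕ :=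
  if ∃ w ∈ N, G.Reachable w x ∧ c w = a then Equiv.swap a b (c x) else c x

theorem isProper_swapColors (hc : IsProper G c) : IsProper G (swapColors G N a b c) := by
  intro x y hxy
  have hiff : (∃ w ∈ N, G.Reachable w x ∧ c w = a) ↔ ∃ w ∈ N, G.Reachable w y ∧ c w = a :=
    exists_congr fun w => and_congr_right fun _ => and_congr_left fun _ =>
      ⟨fun h => h.trans hxy.reachable, fun h => h.trans hxy.symm.reachable⟩
  by_cases hy : ∃ w ∈ N, G.Reachable w y ∧ c w = a
  · rw [swapColors, swapColors, if_pos (hiff.2 hy), if_pos hy]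
    exact (Equiv.swap a b).injective.ne (hc hxy)
  · rw [swapColors, swapColors, if_neg (hiff.not.2 hy), if_neg hy]
    exact hc hxy

theorem swapColors_lt {k : ℕ} (ha : a < k) (hb : b < k) {x : V} (hx : c x < k) :
    swapColors G N a b c x < k := by
  simp only [swapColors, Equiv.swap_apply_def]
  split_ifs <;> assumption

theorem swapColors_ne (hN : N.InjOn G.connectedComponentMk) (hab : a ≠ b) {x : V} (hx : x ∈ N) :
    swapColors G N a b c x ≠ a := by
  simp only [swapColors]
  split_ifs with h
  · obtain ⟨w, hw, hwx, rfl⟩ := h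
    obtain rfl := hN hw hx (ConnectedComponent.sound hwx)
    simpa using hab.symm
  · exact fun hxa => h ⟨x, hx, .rfl, hxa⟩

theorem swapColors_of_forall_ne {x : V} (h : ∀ w ∈ N, G.Reachable w x → c w ≠ a) :
    swapColors G N a b c x = c x :=
  if_neg fun ⟨w, hw, hwx, hwa⟩ => h w hw hwx hwa

end Recoloring

section DeleteVertex

variable {V : Type*} {G : SimpleGraph V} {v : V}

theorem injOn_connectedComponentMk_of_isBridge (hv : ∀ w, G.Adj v w → G.IsBridge s(v, w)) :
    (Subtype.val ⁻¹' G.neighborSet v).InjOn (G.induce {u | u ≠ v}).connectedComponentMk := by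
  intro x hx y hy hxy
  by_contra hne
  have hne' : y.1 ≠ x.1 := Subtype.val_injective.ne (Ne.symm hne)
  let f : G.induce {u | u ≠ v} →g G.deleteEdges {s(v, x.1)} :=
    ⟨Subtype.val, fun {y z} hyz => deleteEdges_adj.2
      ⟨hyz, by simp [show y.1 ≠ v from y.2, show z.1 ≠ v from z.2]⟩⟩
  have hvy : (G.deleteEdges {s(v, x.1)}).Adj v y :=
    deleteEdges_adj.2 ⟨hy, by simp [hne', show y.1 ≠ v from y.2]⟩
  exact isBridge_iff.1 (hv x hx) <|
    hvy.reachable.trans ((ConnectedComponent.exact hxy).symm.map f)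

theorem IsProper.exists_extend {k a : ℕ} {c : {u | u ≠ v} → ℕ}
    (hc : IsProper (G.induce {u | u ≠ v}) c) (hck : ∀ x, c x < k) (hak : a < k)
    (hca : ∀ w ∈ Subtype.val ⁻¹' G.neighborSet v, c w ≠ a) :
    ∃ d, IsProper G d ∧ (∀ x, d x < k) ∧ d ∘ Subtype.val = c := by
  let d : V → ℕ := Function.extend Subtype.val c fun _ => a
  have hd_val (x : {u | u ≠ v}) : d x = c x := Subtype.val_injective.extend_apply _ _ x
  have hdv : d v = a := Function.extend_apply' _ _ _ fun ⟨x, hx⟩ => x.2 hx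
  refine ⟨d, fun x y hxy => ?_, fun x => ?_, funext hd_val⟩
  · rcases eq_or_ne x v with rfl | hx
    · exact hdv ▸ hd_val ⟨y, hxy.ne'⟩ ▸ (hca ⟨y, hxy.ne'⟩ hxy).symm
    rcases eq_or_ne y v with rfl | hy
    · exact hdv ▸ hd_val ⟨x, hx⟩ ▸ hca ⟨x, hx⟩ hxy.symm
    exact hd_val ⟨x, hx⟩ ▸ hd_val ⟨y, hy⟩ ▸ hc (x := ⟨x, hx⟩) (y := ⟨y, hy⟩) hxy
  · rcases eq_or_ne x v with rfl | hx
    · exact hdv ▸ hak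
    · exact hd_val ⟨x, hx⟩ ▸ hck ⟨x, hx⟩

theorem IsZColoring.exists_of_isBridge {k : ℕ} {c : {u | u ≠ v} → ℕ}
    (hc : IsZColoring (G.induce {u | u ≠ v}) k c)
    (hv : ∀ w, G.Adj v w → G.IsBridge s(v, w)) (hk : 1 < k) : ∃ d, IsZColoring G k d := by
  let H := G.induce {u | u ≠ v}
  let N : Set {u | u ≠ v} := Subtype.val ⁻¹' G.neighborSet v
  have hN : N.InjOn H.connectedComponentMk := injOn_connectedComponentMk_of_isBridge hv
  obtain ⟨C, hC⟩ := hc.exists_connectedComponent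
  obtain ⟨a, b, hab, hak, hbk, hCa⟩ :
      ∃ a b, a ≠ b ∧ a < k ∧ b < k ∧ ∀ w ∈ N, w ∈ C.supp → c w ≠ a := by
    by_cases h : ∃ w ∈ N, w ∈ C.supp ∧ c w = 0
    · obtain ⟨x, hxN, hxC, hx⟩ := h
      refine ⟨1, 0, one_ne_zero, hk, by lia, fun w hwN hwC => ?_⟩
      simp [hN hwN hxN (hwC.trans hxC.symm), hx]
    · exact ⟨0, 1, zero_ne_one, by lia, hk, by simpa using h⟩
  have hproper : IsProper H (swapColors H N a b c) := isProper_swapColors hc.2.1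
  obtain ⟨d, hd, hdk, hdc⟩ := hproper.exists_extend
    (fun x => swapColors_lt hak hbk (hc.1 x)) hak fun w hw => swapColors_ne hN hab hw
  refine hC.exists_of_hom ((Embedding.induce _).toHom.comp C.toSimpleGraph_hom) hd hdk ?_
  ext x
  refine (congrFun hdc x).trans (swapColors_of_forall_ne fun w hw hwx => hCa w hw ?_)
  exact (ConnectedComponent.sound hwx).trans x.2

theorem IsZColoring.exists_ge_of_isBridge {k : ℕ} {c : {u | u ≠ v} → ℕ}
    (hc : IsZColoring (G.induce {u | u ≠ v}) k c)
    (hv : ∀ w, G.Adj v w → G.IsBridge s(v, w)) : ∃ m ≥ k, ∃ d, IsZColoring G m d := by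
  rcases lt_or_ge 1 k with hk | hk
  · exact ⟨k, le_rfl, hc.exists_of_isBridge hv hk⟩
  · have hproper : IsProper (G.induce {u | u ≠ v}) c := hc.2.1
    have hlt (x) : c x < 1 := (hc.1 x).trans_le hk
    obtain ⟨d, hd, hd2, -⟩ := hproper.exists_extend
      (fun x => (hlt x).trans one_lt_two) one_lt_two fun w _ => (hlt w).ne
    have : Nonempty V := ⟨v⟩
    obtain ⟨m, hm, h⟩ := hd.exists_isZColoring_of_lt_two hd2
    exact ⟨m, hk.trans hm, h⟩

end DeleteVertex

theorem zNum_deleteVert_le_general {V : Type*} (G : SimpleGraph V)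
    (hG : BddAbove {k | ∃ c : V → ℕ, IsZColoring G k c}) (v : V)
    (hv : ∀ w, G.Adj v w → G.IsBridge s(v, w)) :
    zNum (G.induce {u | u ≠ v}) ≤ zNum G := by
  refine csSup_le' ?_
  rintro k ⟨c, hc⟩
  obtain ⟨m, hkm, hm⟩ := hc.exists_ge_of_isBridge hv
  exact hkm.trans (le_csSup hG hm)

/-- for every finite tree `T` and every vertex `v` of `T`,
deleting `v` does not increase the z-chromatic number: `z(T - v) ≤ z(T)`. -/
theorem zNum_deleteVert_le {V : Type u} [Fintype V] (T : SimpleGraph V)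
    (hT : T.IsTree) (v : V) :
    zNum (T.induce {u : V | u ≠ v}) ≤ zNum T :=
  zNum_deleteVert_le_general T (bddAbove_setOf_isZColoring T) v fun _ hw =>
    isAcyclic_iff_forall_adj_isBridge.1 hT.isAcyclic hw
end

section
/- For every integer k ≥ 1, the tree atom T_k satisfies z(T_k) = ⌈(k+1)/2⌉, where z denotes the z-chromatic number. -/
open SimpleGraph

universe u v

/-- Vertex set of the tree atom `Tₖ`: `T₁` has one vertex, and `T_{k+1}` has
one new pendant leaf (the `Sum.inr` copy) for each vertex of `Tₖ`. -/
def AtomVert : ℕ → Type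
  | 0 => Empty
  | 1 => PUnit
  | (k + 2) => AtomVert (k + 1) ⊕ AtomVert (k + 1)

/-- Attach one new pendant leaf (`Sum.inr a`) to each vertex (`Sum.inl a`)
of a graph. -/
def pendantExtend {W : Type} (G : SimpleGraph W) : SimpleGraph (W ⊕ W) :=
  SimpleGraph.fromRel (fun x y =>
    (∃ a b, x = Sum.inl a ∧ y = Sum.inl b ∧ G.Adj a b) ∨
    (∃ a, x = Sum.inl a ∧ y = Sum.inr a))

/-- The tree atom `Tₖ`: `T₁ = K₁`, `T₂ = K₂`, and `T_{k+1}` is obtained from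
`Tₖ` by attaching one pendant leaf to each vertex of `Tₖ`. -/
def AtomGraph : (k : ℕ) → SimpleGraph (AtomVert k)
  | 0 => ⊥
  | 1 => ⊥
  | (k + 2) => pendantExtend (AtomGraph (k + 1))

/-!
Upper bound: in a z-coloring with `m + 1` colors some vertex has `m` neighbors of degree at least
`m`. If a vertex of `Tₖ` has `s ≥ 1` neighbors of degree at least `d ≥ 1`, then `s + d ≤ k`:
attaching pendant leaves raises all old degrees by one and, for `d ≥ 2`, creates no new neighbor of
degree at least `d` for an old vertex. Hence `2 * m ≤ k`.

Lower bound: for `2 * M ≤ k`, color `Tₖ` while it grows. The initial vertex gets the top color `M`,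
and a leaf after which `r` further rounds follow gets the color `r % M`, unless its neighbor has
that color. The last `M` rounds then show every old vertex all colors below `M` other than its own,
and the leaves that the initial vertex gets in the `M` rounds with `M - 1 ≤ r ≤ 2 * M - 2` carry
each color below `M` once and have enough rounds left to see all other colors.
-/

section PendantExtend

variable {W : Type} {G : SimpleGraph W} {a b : W}

@[simp]
theorem pendantExtend_adj_inl_inl : (pendantExtend G).Adj (.inl a) (.inl b) ↔ G.Adj a b := by
  simpa [pendantExtend, G.adj_comm b a] using G.ne_of_adj

@[simp]
theorem pendantExtend_adj_inl_inr : (pendantExtend G).Adj (.inl a) (.inr b) ↔ a = b := by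
  simp [pendantExtend, eq_comm]

@[simp]
theorem pendantExtend_adj_inr_inl : (pendantExtend G).Adj (.inr a) (.inl b) ↔ a = b := by
  rw [SimpleGraph.adj_comm, pendantExtend_adj_inl_inr, eq_comm]

@[simp]
theorem not_pendantExtend_adj_inr_inr : ¬ (pendantExtend G).Adj (.inr a) (.inr b) := by
  simp [pendantExtend]

theorem neighborSet_pendantExtend_inl :
    (pendantExtend G).neighborSet (.inl a) = insert (.inr a) (.inl '' G.neighborSet a) := by
  ext (b | b) <;> simp [eq_comm]

theorem neighborSet_pendantExtend_inr :
    (pendantExtend G).neighborSet (.inr a) = {.inl a} := by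
  ext (b | b) <;> simp [eq_comm]

theorem encard_neighborSet_pendantExtend_inl :
    ((pendantExtend G).neighborSet (.inl a)).encard = (G.neighborSet a).encard + 1 := by
  rw [neighborSet_pendantExtend_inl, Set.encard_insert_of_notMem (by simp),
    Sum.inl_injective.encard_image]

theorem encard_neighborSet_pendantExtend_inr :
    ((pendantExtend G).neighborSet (.inr a)).encard = 1 := by
  rw [neighborSet_pendantExtend_inr, Set.encard_singleton]

end PendantExtend

section UpperBound

/-- The neighbors of `v` that have degree at least `d`. Degrees are measured by `Set.encard`, so
that no finiteness assumption is needed. -/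
def heavyNeighborSet {V : Type u} (G : SimpleGraph V) (d : ℕ) (v : V) : Set V :=
  {w | G.Adj v w ∧ d ≤ (G.neighborSet w).encard}

theorem encard_heavyNeighborSet_le {V : Type u} (G : SimpleGraph V) (d : ℕ) (v : V) :
    (heavyNeighborSet G d v).encard ≤ (G.neighborSet v).encard :=
  Set.encard_le_encard fun _ hw ↦ hw.1

theorem heavyNeighborSet_pendantExtend_inl {W : Type} (G : SimpleGraph W) {d : ℕ} (hd : 1 ≤ d)
    (a : W) :
    heavyNeighborSet (pendantExtend G) (d + 1) (.inl a) = .inl '' heavyNeighborSet G d a := by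
  ext (b | b)
  · simp [heavyNeighborSet, encard_neighborSet_pendantExtend_inl]
  · have leaf_not_heavy : ¬ (d : ℕ∞) + 1 ≤ 1 := by norm_cast; lia
    simp [heavyNeighborSet, encard_neighborSet_pendantExtend_inr, leaf_not_heavy]

theorem encard_heavyNeighborSet_pendantExtend_inl {W : Type} (G : SimpleGraph W) {d : ℕ}
    (hd : 1 ≤ d) (a : W) :
    (heavyNeighborSet (pendantExtend G) (d + 1) (.inl a)).encard =
      (heavyNeighborSet G d a).encard := by
  rw [heavyNeighborSet_pendantExtend_inl G hd, Sum.inl_injective.encard_image]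

theorem encard_neighborSet_atomGraph_le (n : ℕ) (v : AtomVert (n + 1)) :
    ((AtomGraph (n + 1)).neighborSet v).encard ≤ n := by
  induction n with
  | zero => simp [AtomGraph]
  | succ n ih =>
    rcases v with a | a
    · exact encard_neighborSet_pendantExtend_inl.trans_le (by push_cast; gcongr; exact ih a)
    · exact encard_neighborSet_pendantExtend_inr.trans_le (by norm_cast; lia)

theorem add_le_of_le_encard_heavyNeighborSet_atomGraph (n : ℕ) (v : AtomVert (n + 1)) {s d : ℕ}
    (hs : 1 ≤ s) (hd : 1 ≤ d) (h : s ≤ (heavyNeighborSet (AtomGraph (n + 1)) d v).encard) :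
    s + d ≤ n + 1 := by
  induction n generalizing d with
  | zero =>
    have hs0 : s ≤ 0 := by
      exact_mod_cast (h.trans (encard_heavyNeighborSet_le _ d v)).trans
        (encard_neighborSet_atomGraph_le 0 v)
    lia
  | succ n ih =>
    have le_degree := h.trans (encard_heavyNeighborSet_le _ d v)
    obtain rfl | hd := hd.eq_or_lt
    · have hsn : s ≤ n + 1 := by
        exact_mod_cast le_degree.trans (encard_neighborSet_atomGraph_le (n + 1) v)
      lia
    obtain ⟨d, rfl⟩ := Nat.exists_eq_add_of_le' hd.le
    rcases v with a | a
    · have := ih a (by lia) <|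
        h.trans_eq (encard_heavyNeighborSet_pendantExtend_inl _ (by lia) a)
      lia
    · have hs1 : s ≤ 1 := by
        exact_mod_cast le_degree.trans_eq encard_neighborSet_pendantExtend_inr
      obtain ⟨w, -, hw⟩ := Set.one_le_encard_iff_nonempty.1 ((Nat.one_le_cast.2 hs).trans h)
      have hdn : d + 1 ≤ n + 1 := by
        exact_mod_cast hw.trans (encard_neighborSet_atomGraph_le (n + 1) w)
      lia

theorem IsZColoring.exists_le_encard_heavyNeighborSet {V : Type u} {G : SimpleGraph V} {m : ℕ}
    {c : V → ℕ} (hc : IsZColoring G (m + 1) c) :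
    ∃ v, m ≤ (heavyNeighborSet G m v).encard := by
  obtain ⟨-, -, -, -, u, hcu, hadj, hsees⟩ := hc
  have degree_witness (j : ℕ) (hj : j ≤ m) : m ≤ (G.neighborSet (u j)).encard := by
    have other_colors : ↑((Finset.range (m + 1)).erase j) ⊆ c '' G.neighborSet (u j) := by
      intro i hi
      simp only [Finset.coe_erase, Finset.coe_range, Set.mem_sdiff, Set.mem_Iio,
        Set.mem_singleton_iff] at hi
      exact hsees i hi.1 j (by lia) hi.2
    calc (m : ℕ∞) = (↑((Finset.range (m + 1)).erase j) : Set ℕ).encard := by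
          rw [Set.encard_coe_eq_coe_finsetCard, Finset.card_erase_of_mem (by simp; lia),
            Finset.card_range, Nat.add_sub_cancel]
      _ ≤ (c '' G.neighborSet (u j)).encard := Set.encard_le_encard other_colors
      _ ≤ (G.neighborSet (u j)).encard := Set.encard_image_le _ _
  have u_injOn : Set.InjOn u (Finset.range m) :=
    Set.LeftInvOn.injOn (f₁' := c) fun j hj ↦ hcu j (by simp at hj; lia)
  have witnesses_heavy : u '' Finset.range m ⊆ heavyNeighborSet G m (u m) := by
    rintro _ ⟨j, hj, rfl⟩
    have hj : j < m := by simpa using hj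
    exact ⟨hadj j hj, degree_witness j hj.le⟩
  refine ⟨u m, ?_⟩
  calc (m : ℕ∞) = (u '' Finset.range m).encard := by
        rw [u_injOn.encard_image, Set.encard_coe_eq_coe_finsetCard, Finset.card_range]
    _ ≤ (heavyNeighborSet G m (u m)).encard := Set.encard_le_encard witnesses_heavy

theorem IsZColoring.le_of_atomGraph {n m : ℕ} {c : AtomVert (n + 1) → ℕ}
    (hc : IsZColoring (AtomGraph (n + 1)) m c) : m ≤ (n + 3) / 2 := by
  rcases m with _ | _ | m
  · lia
  · lia
  obtain ⟨v, hv⟩ := hc.exists_le_encard_heavyNeighborSet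
  have := add_le_of_le_encard_heavyNeighborSet_atomGraph n v (by lia) (by lia) hv
  lia

end UpperBound

section LowerBound

variable {V : Type u} {W : Type}

/-- Vertex `v` *will see* color `i`: it already has a neighbor of color `i`, or that neighbor is
left to round `i` among the rounds `r - 1, …, 0` of pendant leaves still to be attached. -/
def WillSee (G : SimpleGraph V) (c : V → ℕ) (r : ℕ) (v : V) (i : ℕ) : Prop :=
  (∃ w, G.Adj v w ∧ c w = i) ∨ i < r

theorem willSee_zero {G : SimpleGraph V} {c : V → ℕ} {v : V} {i : ℕ} :
    WillSee G c 0 v i ↔ ∃ w, G.Adj v w ∧ c w = i := by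
  simp [WillSee]

/-- A coloring with colors `0, …, M` that `pendantColoring` turns into a z-coloring when `r`
further rounds of pendant leaves, numbered `r - 1, …, 0`, are attached. For each `j < M` the center
`ρ` has a neighbor of color `j` that will see all other colors, or gets one in some round `t`; then
`M ≤ t + 1` because that leaf still has to see `M - 1` colors below `M` in the `t` rounds that
follow. -/
structure IsPartialZColoring (G : SimpleGraph V) (M r : ℕ) (c : V → ℕ) : Prop where
  le : ∀ v, c v ≤ M
  ne : ∀ ⦃v w⦄, G.Adj v w → c v ≠ c w
  willSee : ∀ v, ∀ i < c v, WillSee G c r v i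
  center : ∃ ρ, c ρ = M ∧ ∀ j < M,
    (∃ u, G.Adj ρ u ∧ c u = j ∧ ∀ i < M, i ≠ j → WillSee G c r u i) ∨
      ∃ t < r, M ≤ t + 1 ∧ t % M = j

/-- The color of a leaf attached to a vertex of color `p` when `r` further rounds will follow. The
residue `r % M` runs once through all colors below `M` in the rounds `2 * M - 2, …, M - 1`. A leaf
that may not take it gets color `0`, or color `1` if its neighbor has color `0`, and so misses no
smaller color. -/
def leafColor (M r p : ℕ) : ℕ :=
  if r % M = p then (if p = 0 then 1 else 0) else r % M

/-- The extension of the coloring `c` of `G` to `pendantExtend G` by `leafColor`. -/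
def pendantColoring (M r : ℕ) (c : W → ℕ) : W ⊕ W → ℕ :=
  Sum.elim c fun a ↦ leafColor M r (c a)

theorem leafColor_le {M : ℕ} (hM : 0 < M) (r p : ℕ) : leafColor M r p ≤ M := by
  have := Nat.mod_lt r hM
  unfold leafColor
  split_ifs <;> lia

theorem leafColor_ne (M r p : ℕ) : leafColor M r p ≠ p := by
  unfold leafColor
  split_ifs <;> lia

theorem leafColor_of_mod_ne {M r p : ℕ} (h : r % M ≠ p) : leafColor M r p = r % M :=
  if_neg h

theorem eq_or_lt_of_lt_leafColor {M r p i : ℕ} (h : i < leafColor M r p) : p = i ∨ i < r := by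
  have := Nat.mod_le r M
  unfold leafColor at h
  split_ifs at h <;> lia

theorem WillSee.pendantExtend {G : SimpleGraph W} {c : W → ℕ} {M r i : ℕ} {a : W}
    (h : WillSee G c (r + 1) a i) (hi : i < M) (hia : i ≠ c a) :
    WillSee (pendantExtend G) (pendantColoring M r c) r (.inl a) i := by
  rcases h with ⟨w, haw, rfl⟩ | hir
  · exact .inl ⟨.inl w, pendantExtend_adj_inl_inl.2 haw, rfl⟩
  obtain hir | rfl := Nat.lt_succ_iff_lt_or_eq.1 hir
  · exact .inr hir
  · have hmod : i % M = i := Nat.mod_eq_of_lt hi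
    refine .inl ⟨.inr a, pendantExtend_adj_inl_inr.2 rfl, ?_⟩
    exact (leafColor_of_mod_ne (by rwa [hmod])).trans hmod

namespace IsPartialZColoring

theorem const_bot [Nonempty V] {M r : ℕ} (h : 2 * M ≤ r + 1) :
    IsPartialZColoring (⊥ : SimpleGraph V) M r fun _ ↦ M where
  le _ := le_rfl
  ne _ _ h := h.elim
  willSee _ i hi := .inr (by lia)
  center := by
    refine ⟨Classical.arbitrary V, rfl, fun j hj ↦ .inr ?_⟩
    obtain hj' | hj' : j + 1 = M ∨ j + 1 < M := by lia
    · exact ⟨j, by lia, hj'.ge, Nat.mod_eq_of_lt hj⟩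
    · exact ⟨j + M, by lia, by lia, by rw [Nat.add_mod_right, Nat.mod_eq_of_lt hj]⟩

variable {M r : ℕ}

theorem pendantExtend {G : SimpleGraph W} {c : W → ℕ} (hM : 0 < M)
    (hc : IsPartialZColoring G M (r + 1) c) :
    IsPartialZColoring (pendantExtend G) M r (pendantColoring M r c) where
  le := by
    rintro (a | a)
    · exact hc.le a
    · exact leafColor_le hM r (c a)
  ne := by
    rintro (a | a) (b | b) h
    · exact hc.ne (pendantExtend_adj_inl_inl.1 h)
    · obtain rfl := pendantExtend_adj_inl_inr.1 h
      exact (leafColor_ne M r (c a)).symm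
    · obtain rfl := pendantExtend_adj_inr_inl.1 h
      exact leafColor_ne M r (c a)
    · exact absurd h not_pendantExtend_adj_inr_inr
  willSee := by
    rintro (a | a) i hi
    · exact (hc.willSee a i hi).pendantExtend (hi.trans_le (hc.le a)) hi.ne
    · obtain hca | hir := eq_or_lt_of_lt_leafColor hi
      · exact .inl ⟨.inl a, pendantExtend_adj_inr_inl.2 rfl, hca⟩
      · exact .inr hir
  center := by
    obtain ⟨ρ, hρ, hwit⟩ := hc.center
    refine ⟨.inl ρ, hρ, fun j hj ↦ ?_⟩
    obtain ⟨u, hρu, rfl, hu⟩ | ⟨t, htr, hMt, rfl⟩ := hwit j hj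
    · exact .inl ⟨.inl u, pendantExtend_adj_inl_inl.2 hρu, rfl,
        fun i hi hiu ↦ (hu i hi hiu).pendantExtend hi hiu⟩
    obtain htr | rfl := Nat.lt_succ_iff_lt_or_eq.1 htr
    · exact .inr ⟨t, htr, hMt, rfl⟩
    · refine .inl ⟨.inr ρ, pendantExtend_adj_inl_inr.2 rfl,
        leafColor_of_mod_ne (by lia), fun i hi hit ↦ .inr ?_⟩
      have : i ≠ t := by
        rintro rfl
        exact hit (Nat.mod_eq_of_lt hi).symm
      lia

theorem isZColoring {G : SimpleGraph V} {c : V → ℕ} (hc : IsPartialZColoring G M 0 c) :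
    IsZColoring G (M + 1) c := by
  have sees_smaller (v : V) (i : ℕ) (hi : i < c v) : ∃ w, G.Adj v w ∧ c w = i :=
    willSee_zero.1 (hc.willSee v i hi)
  obtain ⟨ρ, hρ, hwit⟩ := hc.center
  have exists_witness (j : ℕ) (hj : j ≤ M) : ∃ u, c u = j ∧ (j = M → u = ρ) ∧
      (j < M → G.Adj ρ u) ∧ ∀ i ≤ M, i ≠ j → ∃ w, G.Adj u w ∧ c w = i := by
    obtain rfl | hj := hj.eq_or_lt
    · exact ⟨ρ, hρ, fun _ ↦ rfl, fun h ↦ absurd h (lt_irrefl _),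
        fun i hi hij ↦ sees_smaller ρ i (by lia)⟩
    obtain ⟨u, hρu, hcu, hu⟩ | ⟨t, ht, -⟩ := hwit j hj
    · refine ⟨u, hcu, fun h ↦ absurd h hj.ne, fun _ ↦ hρu, fun i hi hij ↦ ?_⟩
      obtain rfl | hi := hi.eq_or_lt
      · exact ⟨ρ, hρu.symm, hρ⟩
      · exact willSee_zero.1 (hu i hi hij)
    · exact absurd ht t.not_lt_zero
  have : Nonempty V := ⟨ρ⟩
  choose! u hcu huM hadj hsees using exists_witness
  refine ⟨fun v ↦ Nat.lt_succ_of_le (hc.le v), hc.ne, fun i hi ↦ ⟨u i, hcu i (by lia)⟩,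
    sees_smaller, u, fun j hj ↦ hcu j (by lia), fun j hj ↦ ?_,
    fun i hi j hj hij ↦ hsees j (by lia) i (by lia) hij⟩
  rw [Nat.add_sub_cancel] at hj ⊢
  rw [huM M le_rfl rfl]
  exact hadj j hj.le hj

end IsPartialZColoring

theorem exists_isPartialZColoring_atomGraph {M : ℕ} (hM : 0 < M) (n r : ℕ)
    (h : 2 * M ≤ n + r + 1) : ∃ c, IsPartialZColoring (AtomGraph (n + 1)) M r c := by
  induction n generalizing r with
  | zero =>
    have : Nonempty (AtomVert 1) := ⟨PUnit.unit⟩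
    exact ⟨_, .const_bot (by lia)⟩
  | succ n ih =>
    obtain ⟨c, hc⟩ := ih (r + 1) (by lia)
    exact ⟨_, hc.pendantExtend hM⟩

theorem exists_isZColoring_atomGraph (n : ℕ) :
    ∃ c, IsZColoring (AtomGraph (n + 1)) ((n + 3) / 2) c := by
  have hM : (n + 3) / 2 = (n + 1) / 2 + 1 := by lia
  rw [hM]
  suffices ∃ c, IsPartialZColoring (AtomGraph (n + 1)) ((n + 1) / 2) 0 c from
    this.imp fun _ hc ↦ hc.isZColoring
  cases n with
  | zero =>
    have : Nonempty (AtomVert 1) := ⟨PUnit.unit⟩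
    exact ⟨_, .const_bot (by lia)⟩
  | succ n => exact exists_isPartialZColoring_atomGraph (by lia) (n + 1) 0 (by lia)

end LowerBound

/-- for every `k ≥ 1`, the tree atom `Tₖ` satisfies
`z(Tₖ) = ⌈(k+1)/2⌉` (note that `⌈(k+1)/2⌉ = (k+2)/2` in ℕ-division). -/
theorem zNum_atom (k : ℕ) (hk : 1 ≤ k) :
    zNum (AtomGraph k) = (k + 2) / 2 := by
  obtain ⟨n, rfl⟩ := Nat.exists_eq_add_of_le' hk
  have max_coloring :
      IsGreatest {m | ∃ c, IsZColoring (AtomGraph (n + 1)) m c} ((n + 3) / 2) :=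
    ⟨exists_isZColoring_atomGraph n, fun _ ⟨_, hc⟩ ↦ hc.le_of_atomGraph⟩
  exact max_coloring.csSup_eq
end
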